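/- arXiv:2112.12246 — 4 statements merged into one kernel-verified Lean document; each statement's English description precedes it below -/
import Mathlib

section
/- Let $X$ and $Y$ be Tychonoff topological spaces of countable netweight, and let $Z$ be a Tychonoff space that admits a perfect map onto a separable metric space. If $C_p(X\times Z)$ is homeomorphic to $C_p(Y\times Z)$, then there exists a separable metrizable space $M$ which is the image of $Z$ under a perfect map such that $C_p(X\times M)$ is homeomorphic to $C_p(Y\times M)$. -/
open TopologicalSpace Function Set Topology

/-- `Cp X`: continuous real-valued functions on `X` with the topology of pointwise
convergence (subspace topology from the product `ℝ^X`). -/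
abbrev Cp (X : Type*) [TopologicalSpace X] : Type _ := {f : X → ℝ // Continuous f}

/-- A space has countable netweight if it has a countable network. -/
def HasCountableNetweight (X : Type*) [TopologicalSpace X] : Prop :=
  ∃ S : Set (Set X), S.Countable ∧
    ∀ x : X, ∀ U : Set X, IsOpen U → x ∈ U → ∃ s ∈ S, x ∈ s ∧ s ⊆ U

/-- A map is perfect if it is continuous, closed, and has compact fibers. -/
def IsPerfectMap {α β : Type*} [TopologicalSpace α] [TopologicalSpace β] (f : α → β) : Prop :=
  Continuous f ∧ IsClosedMap f ∧ ∀ b : β, IsCompact (f ⁻¹' {b})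

/-- A space is countably compact if every countable open cover has a finite subcover. -/
def CountablyCompact (X : Type*) [TopologicalSpace X] : Prop :=
  ∀ U : ℕ → Set X, (∀ n, IsOpen (U n)) → (⋃ n, U n) = Set.univ →
    ∃ t : Finset ℕ, (⋃ n ∈ t, U n) = Set.univ

universe u

/-!
For a countable set `A` of continuous functions on `Z`, let `M` be the image of `Z` under the
diagonal product of `A` and the given perfect map `g`. Then `M` is a separable metrizable perfect
image of `Z`, and `X × Z → X × M` is again perfect, hence a quotient map, so `C_p(X × M)` is the
closed subspace of `C_p(X × Z)` of functions determined by `g` and `A`. It suffices to find one `A`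
for which the homeomorphism carries this subspace for `X` onto the one for `Y`.

This is done by closing off. Since `X × M` has countable netweight, so does `C_p(X × M)`, which is
therefore separable. A function on `Y × Z` is determined by countably many functions on `Z`, its
slices over a dense subset of `Y`. Hence the homeomorphism and its inverse send functions determined
by a countable `A` to functions determined by a larger countable set. Iterating gives an increasing
sequence `A n`. Every function determined by its union is a pointwise limit of functions determined
by a single `A n`: these form a directed union of algebras, which separates all points separated by
the limit.
-/

lemma exists_monotone_seq_countable {α : Type*} {R : Set α → Set α → Prop}
    (h : ∀ A, A.Countable → ∃ B, B.Countable ∧ A ⊆ B ∧ R A B) :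
    ∃ A : ℕ → Set α, Monotone A ∧ (∀ n, (A n).Countable) ∧ ∀ n, R (A n) (A (n + 1)) := by
  choose! next hcount hsub hR using h
  let A : ℕ → Set α := fun n => next^[n] ∅
  have hsucc n : A (n + 1) = next (A n) := iterate_succ_apply' next n ∅
  have hA n : (A n).Countable := by
    induction n with
    | zero => exact countable_empty
    | succ n ih => exact hsucc n ▸ hcount _ ih
  exact ⟨A, monotone_nat_of_le_succ fun n => hsucc n ▸ hsub _ (hA n), hA,
    fun n => hsucc n ▸ hR _ (hA n)⟩

section PointwiseInterpolation

variable {B 𝕜 : Type*} [Field 𝕜] {𝒜 : Subalgebra 𝕜 (B → 𝕜)}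

lemma exists_mem_subalgebra_eq_zero_ne_zero {a : B} {T : Finset B}
    (hsep : ∀ c ∈ T, ∃ H ∈ 𝒜, H a ≠ H c) : ∃ P ∈ 𝒜, (∀ c ∈ T, P c = 0) ∧ P a ≠ 0 := by
  choose! H hH hne using hsep
  refine ⟨∏ c ∈ T, (H c - algebraMap 𝕜 (B → 𝕜) (H c c)),
    𝒜.prod_mem fun c hc => 𝒜.sub_mem (hH c hc) (𝒜.algebraMap_mem _), fun c hc => ?_, ?_⟩
  · rw [Finset.prod_apply]
    exact Finset.prod_eq_zero hc (sub_self _)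
  · rw [Finset.prod_apply]
    exact Finset.prod_ne_zero_iff.2 fun c hc => sub_ne_zero.2 (hne c hc)

lemma exists_mem_subalgebra_forall_eq {F : B → 𝕜} (hF : ∀ b c, F b ≠ F c → ∃ H ∈ 𝒜, H b ≠ H c)
    (T : Finset B) : ∃ G ∈ 𝒜, ∀ b ∈ T, G b = F b := by
  classical
  induction T using Finset.induction_on with
  | empty => exact ⟨0, 𝒜.zero_mem, by simp⟩
  | insert a T _ ih =>
    obtain ⟨G, hG, hGF⟩ := ih
    by_cases hsep : ∀ c ∈ T, ∃ H ∈ 𝒜, H a ≠ H c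
    · obtain ⟨P, hP, hPT, hPa⟩ := exists_mem_subalgebra_eq_zero_ne_zero hsep
      refine ⟨G + ((F a - G a) / P a) • P, 𝒜.add_mem hG (𝒜.smul_mem hP _),
        Finset.forall_mem_insert _ _ _ |>.2 ⟨?_, fun c hc => ?_⟩⟩
      · simp [div_mul_cancel₀ _ hPa]
      · simp [hPT c hc, hGF c hc]
    · push Not at hsep
      obtain ⟨c, hc, hac⟩ := hsep
      have hFac : F a = F c := by
        by_contra hne
        obtain ⟨H, hH, hHne⟩ := hF a c hne
        exact hHne (hac H hH)
      exact ⟨G, hG, Finset.forall_mem_insert _ _ _ |>.2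
        ⟨(hac G hG).trans ((hGF c hc).trans hFac.symm), hGF⟩⟩

lemma mem_closure_subalgebra_of_separates [TopologicalSpace 𝕜] {F : B → 𝕜}
    (hF : ∀ b c, F b ≠ F c → ∃ H ∈ 𝒜, H b ≠ H c) : F ∈ closure (𝒜 : Set (B → 𝕜)) := by
  refine mem_closure_iff.2 fun O hO hFO => ?_
  obtain ⟨T, U, hU, hUO⟩ := isOpen_pi_iff.1 hO F hFO
  obtain ⟨G, hG, hGF⟩ := exists_mem_subalgebra_forall_eq hF T
  exact ⟨G, hUO fun b hb => hGF b hb ▸ (hU b hb).2, hG⟩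

end PointwiseInterpolation

namespace HasCountableNetweight

variable {X Y : Type*} [TopologicalSpace X] [TopologicalSpace Y]

lemma of_secondCountable [SecondCountableTopology X] : HasCountableNetweight X := by
  obtain ⟨V, hV, -, hVb⟩ := exists_countable_basis X
  exact ⟨V, hV, fun _ _ hU hx => hVb.exists_subset_of_mem_open hx hU⟩

lemma prod (hX : HasCountableNetweight X) (hY : HasCountableNetweight Y) :
    HasCountableNetweight (X × Y) := by
  obtain ⟨N, hN, hXN⟩ := hX
  obtain ⟨K, hK, hYK⟩ := hY
  refine ⟨image2 (· ×ˢ ·) N K, hN.image2 hK _, fun b U hU hb => ?_⟩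
  obtain ⟨u, v, hu, hv, hbu, hbv, huv⟩ := isOpen_prod_iff.1 hU b.1 b.2 hb
  obtain ⟨s, hs, hbs, hsu⟩ := hXN b.1 u hu hbu
  obtain ⟨t, ht, hbt, htv⟩ := hYK b.2 v hv hbv
  exact ⟨s ×ˢ t, mem_image2_of_mem hs ht, ⟨hbs, hbt⟩, (prod_mono hsu htv).trans huv⟩

lemma separableSpace (hX : HasCountableNetweight X) : SeparableSpace X := by
  obtain ⟨N, hN, hnet⟩ := hX
  have : Countable {s // s ∈ N ∧ s.Nonempty} := (hN.mono fun _ hs => hs.1).to_subtype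
  refine ⟨range fun s : {s // s ∈ N ∧ s.Nonempty} => s.2.2.some, countable_range _,
    dense_iff_inter_open.2 fun U hU ⟨x, hx⟩ => ?_⟩
  obtain ⟨s, hs, hxs, hsU⟩ := hnet x U hU hx
  exact ⟨_, hsU (Nonempty.some_mem ⟨x, hxs⟩), ⟨s, hs, x, hxs⟩, rfl⟩

lemma cp (hX : HasCountableNetweight X) : HasCountableNetweight (Cp X) := by
  obtain ⟨N, hN, hnet⟩ := hX
  obtain ⟨V, hV, -, hVb⟩ := exists_countable_basis ℝ
  let W : Set (Set X × Set ℝ) → Set (Cp X) := fun t => {F | ∀ p ∈ t, MapsTo F.1 p.1 p.2}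
  refine ⟨W '' {t | t.Finite ∧ t ⊆ N ×ˢ V},
    (countable_ofPred_finite_subset (hN.prod hV)).image W, fun F O hO hFO => ?_⟩
  obtain ⟨O', hO', rfl⟩ := isOpen_induced_iff.1 hO
  obtain ⟨T, U, hU, hUO⟩ := isOpen_pi_iff.1 hO' F.1 hFO
  have hbox : ∀ b ∈ T, ∃ p ∈ N ×ˢ V, b ∈ p.1 ∧ MapsTo F.1 p.1 p.2 ∧ p.2 ⊆ U b := fun b hb => by
    obtain ⟨v, hv, hFv, hvU⟩ := hVb.exists_subset_of_mem_open (hU b hb).2 (hU b hb).1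
    obtain ⟨s, hs, hbs, hsv⟩ := hnet b _ ((hVb.isOpen hv).preimage F.2) hFv
    exact ⟨(s, v), ⟨hs, hv⟩, hbs, hsv, hvU⟩
  choose! p hp hbp hFp hpU using hbox
  refine ⟨W (p '' T), mem_image_of_mem W ⟨T.finite_toSet.image p, image_subset_iff.2 hp⟩,
    forall_mem_image.2 hFp, fun G hG => hUO fun b hb => hpU b hb ?_⟩
  exact hG (p b) (mem_image_of_mem p hb) (hbp b hb)

end HasCountableNetweight

section Precomposition

variable {B W : Type*} [TopologicalSpace B] [TopologicalSpace W] {q : B → W}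

/-- The dual map `q^* : C_p(W) → C_p(B)`, `F ↦ F ∘ q`, of a continuous map `q`; it identifies
`C_p(W)` with a subspace of `C_p(B)` when `q` is surjective. -/
def Cp.precomp (hq : Continuous q) (F : Cp W) : Cp B :=
  ⟨F.1 ∘ q, F.2.comp hq⟩

lemma Cp.isEmbedding_precomp (hq : Continuous q) (hs : Surjective q) :
    IsEmbedding (Cp.precomp hq) :=
  .of_comp (.subtype_mk ((Pi.continuous_precomp q).comp continuous_subtype_val) _)
    continuous_subtype_val ((hs.isEmbedding_comp q).comp .subtypeVal)

lemma Cp.range_precomp (hq : IsQuotientMap q) :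
    range (Cp.precomp hq.continuous) = {F : Cp B | F.1.FactorsThrough q} := by
  refine Subset.antisymm (range_subset_iff.2 fun F _ _ h => congrArg F.1 h) fun F hF => ?_
  let q' : C(B, W) := ⟨q, hq.continuous⟩
  let f : C(B, ℝ) := ⟨F.1, F.2⟩
  have hq' : IsQuotientMap q' := hq
  have hF' : FactorsThrough f q' := hF
  exact ⟨⟨hq'.lift f hF', (hq'.lift f hF').continuous⟩,
    Subtype.ext (congrArg DFunLike.coe (hq'.lift_comp f hF'))⟩

end Precomposition

section DiagonalImage

variable {Z S : Type*} [TopologicalSpace Z] (g : Z → S) (A : Set C(Z, ℝ))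

/-- The image of `Z` under the diagonal product `z ↦ (g z, (f z)_{f ∈ A})`. It is the candidate
for the perfect image `M` of `Z`: it is separable metrizable when `S` is and `A` is countable. -/
abbrev DiagonalImage : Type _ :=
  range fun z => (g z, fun f : A => f.1 z)

/-- The diagonal product of `g` and the functions in `A`, as a map onto its image. -/
def toDiagonalImage : Z → DiagonalImage g A :=
  rangeFactorization _

lemma surjective_toDiagonalImage : Surjective (toDiagonalImage g A) :=
  rangeFactorization_surjective

variable {g A} in
lemma toDiagonalImage_eq_iff {z z' : Z} :
    toDiagonalImage g A z = toDiagonalImage g A z' ↔ g z = g z' ∧ ∀ f ∈ A, f z = f z' := by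
  simp [toDiagonalImage, rangeFactorization, Subtype.ext_iff, funext_iff]

variable {g} in
lemma isProperMap_toDiagonalImage [TopologicalSpace S] [T2Space S] (hg : IsProperMap g) :
    IsProperMap (toDiagonalImage g A) := by
  have hcont : Continuous fun z => (g z, fun f : A => f.1 z) :=
    hg.continuous.prodMk (continuous_pi fun f => f.1.continuous)
  exact isProperMap_of_comp_of_t2 (hcont.subtype_mk _)
    (continuous_fst.comp continuous_subtype_val) hg

end DiagonalImage

namespace Cp

section DeterminedBy

variable (X : Type*) {Z S : Type*} [TopologicalSpace X] [TopologicalSpace Z] (g : Z → S)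

/-- The members of `C_p(X × Z)` whose dependence on `z ∈ Z` is only through `g z` and the values
`f z` with `f ∈ A`. -/
def determinedBy (A : Set C(Z, ℝ)) : Set (Cp (X × Z)) :=
  {F | ∀ x z z', g z = g z' → (∀ f ∈ A, f z = f z') → F.1 (x, z) = F.1 (x, z')}

variable {g} in
lemma determinedBy_mono : Monotone (determinedBy X g) :=
  fun _ _ hAB _ hF x z z' hg hB => hF x z z' hg fun f hf => hB f (hAB hf)

lemma isClosed_determinedBy (A : Set C(Z, ℝ)) : IsClosed (determinedBy X g A) := by
  have heval (b : X × Z) : Continuous fun F : Cp (X × Z) => F.1 b :=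
    (continuous_apply b).comp continuous_subtype_val
  simp only [determinedBy, ofPred_forall]
  exact isClosed_iInter fun x => isClosed_iInter fun z => isClosed_iInter fun z' =>
    isClosed_iInter fun _ => isClosed_iInter fun _ => isClosed_eq (heval (x, z)) (heval (x, z'))

/-- `determinedBy X g A` as an algebra of functions; its members are kept as plain functions,
since `Cp` carries no algebraic structure. -/
def determinedSubalgebra (A : Set C(Z, ℝ)) : Subalgebra ℝ (X × Z → ℝ) where
  carrier := Subtype.val '' determinedBy X g A
  mul_mem' := by
    rintro _ _ ⟨F, hF, rfl⟩ ⟨G, hG, rfl⟩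
    exact ⟨⟨F.1 * G.1, F.2.mul G.2⟩,
      fun x z z' h h' => congrArg₂ (· * ·) (hF x z z' h h') (hG x z z' h h'), rfl⟩
  add_mem' := by
    rintro _ _ ⟨F, hF, rfl⟩ ⟨G, hG, rfl⟩
    exact ⟨⟨F.1 + G.1, F.2.add G.2⟩,
      fun x z z' h h' => congrArg₂ (· + ·) (hF x z z' h h') (hG x z z' h h'), rfl⟩
  algebraMap_mem' r := ⟨⟨fun _ => r, continuous_const⟩, fun _ _ _ _ _ => rfl, rfl⟩

/-- The slices of `F` over a dense subset of `X` determine `F`. -/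
lemma exists_countable_mem_determinedBy [SeparableSpace X] (F : Cp (X × Z)) :
    ∃ A : Set C(Z, ℝ), A.Countable ∧ F ∈ determinedBy X g A := by
  obtain ⟨D, hD, hDdense⟩ := exists_countable_dense X
  let slice (x : X) : C(Z, ℝ) := ⟨fun z => F.1 (x, z), F.2.comp (.prodMk_right x)⟩
  refine ⟨slice '' D, hD.image slice, fun x z z' _ hz => ?_⟩
  have hslice : (fun x => F.1 (x, z)) = fun x => F.1 (x, z') :=
    Continuous.ext_on hDdense (F.2.comp (.prodMk_left z)) (F.2.comp (.prodMk_left z'))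
      (forall_mem_image.1 hz)
  exact congrFun hslice x

lemma exists_countable_range_subset_determinedBy [SeparableSpace X] {E : Type*}
    [TopologicalSpace E] [SeparableSpace E] {φ : E → Cp (X × Z)} (hφ : Continuous φ) :
    ∃ A : Set C(Z, ℝ), A.Countable ∧ range φ ⊆ determinedBy X g A := by
  obtain ⟨D, hD, hDdense⟩ := exists_countable_dense E
  choose A hA hmem using exists_countable_mem_determinedBy X g
  refine ⟨⋃ d ∈ D, A (φ d), hD.biUnion fun d _ => hA (φ d), ?_⟩
  have hDA : φ '' D ⊆ determinedBy X g (⋃ d ∈ D, A (φ d)) := image_subset_iff.2 fun d hd =>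
    determinedBy_mono X (subset_biUnion_of_mem (u := fun d => A (φ d)) hd) (hmem (φ d))
  exact (hφ.range_subset_closure_image_dense hDdense).trans
    ((isClosed_determinedBy X g _).closure_subset_iff.2 hDA)

variable {X} {g} [TopologicalSpace S]

lemma exists_mem_determinedBy_apply_ne [T35Space S] (hg : Continuous g)
    {A : ℕ → Set C(Z, ℝ)} {F : Cp (X × Z)} (hF : F ∈ determinedBy X g (⋃ n, A n))
    {b c : X × Z} (hbc : F.1 b ≠ F.1 c) : ∃ n, ∃ G ∈ determinedBy X g (A n), G.1 b ≠ G.1 c := by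
  obtain ⟨x, z⟩ := b
  obtain ⟨x', z'⟩ := c
  by_cases hx : F.1 (x, z) = F.1 (x', z)
  · by_cases hgz : g z = g z'
    · have hf : ∃ n, ∃ f ∈ A n, f z ≠ f z' := by
        by_contra! hA
        refine hbc (hx.trans (hF x' z z' hgz fun f hf => ?_))
        obtain ⟨n, hn⟩ := mem_iUnion.1 hf
        exact hA n f hn
      obtain ⟨n, f, hfA, hne⟩ := hf
      exact ⟨n, ⟨fun b => f b.2, by fun_prop⟩, fun _ _ _ _ h => h f hfA, hne⟩
    · obtain ⟨h, hcont, hne⟩ := separatesPoints_continuous_of_t35Space hgz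
      have hcont : Continuous h := hcont
      exact ⟨0, ⟨fun b => h (g b.2), by fun_prop⟩, fun _ _ _ hgz _ => congrArg h hgz, hne⟩
  · have hslice : Continuous fun b : X × Z => F.1 (b.1, z) := F.2.comp (by fun_prop)
    exact ⟨0, ⟨_, hslice⟩, fun _ _ _ _ _ => rfl, hx⟩

lemma determinedBy_iUnion_subset_closure [T35Space S] (hg : Continuous g)
    {A : ℕ → Set C(Z, ℝ)} (hA : Monotone A) :
    determinedBy X g (⋃ n, A n) ⊆ closure (⋃ n, determinedBy X g (A n)) := by
  intro F hF
  have hdir : Directed (· ≤ ·) fun n => determinedSubalgebra X g (A n) :=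
    Monotone.directed_le fun _ _ hmn => image_mono (determinedBy_mono X (hA hmn))
  have hcoe : ((⨆ n, determinedSubalgebra X g (A n) : Subalgebra ℝ (X × Z → ℝ)) :
      Set (X × Z → ℝ)) = Subtype.val '' ⋃ n, determinedBy X g (A n) := by
    rw [Subalgebra.coe_iSup_of_directed hdir, image_iUnion]
    rfl
  rw [closure_subtype, ← hcoe]
  refine mem_closure_subalgebra_of_separates fun b c hbc => ?_
  obtain ⟨n, G, hG, hne⟩ := exists_mem_determinedBy_apply_ne hg hF hbc
  exact ⟨G.1, le_iSup (fun n => determinedSubalgebra X g (A n)) n (mem_image_of_mem _ hG), hne⟩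

lemma isQuotientMap_prodMap_toDiagonalImage [T2Space S] (hg : IsProperMap g) (A : Set C(Z, ℝ)) :
    IsQuotientMap (Prod.map (id : X → X) (toDiagonalImage g A)) := by
  have hproper : IsProperMap (Prod.map (id : X → X) (toDiagonalImage g A)) :=
    isProperMap_id.prodMap (isProperMap_toDiagonalImage A hg)
  exact hproper.isClosedMap.isQuotientMap hproper.continuous
    (surjective_id.prodMap (surjective_toDiagonalImage g A))

lemma range_precomp_toDiagonalImage [T2Space S] (hg : IsProperMap g) (A : Set C(Z, ℝ)) :
    range (precomp (isQuotientMap_prodMap_toDiagonalImage (X := X) hg A).continuous) =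
      determinedBy X g A := by
  rw [range_precomp (isQuotientMap_prodMap_toDiagonalImage hg A)]
  ext F
  constructor
  · exact fun hF x z z' hz hA => hF (Prod.ext rfl (toDiagonalImage_eq_iff.2 ⟨hz, hA⟩))
  · rintro hF ⟨x, z⟩ ⟨x', z'⟩ h
    obtain ⟨rfl, hz⟩ := Prod.ext_iff.1 h
    exact (toDiagonalImage_eq_iff.1 hz).elim (hF x z z')

variable (X) in
/-- Precomposition with `X × Z → X × DiagonalImage g A`, onto its image. -/
noncomputable def diagonalHomeomorph [T2Space S] (hg : IsProperMap g) (A : Set C(Z, ℝ)) :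
    Cp (X × DiagonalImage g A) ≃ₜ determinedBy X g A :=
  have hq := isQuotientMap_prodMap_toDiagonalImage (X := X) hg A
  (isEmbedding_precomp hq.continuous hq.surjective).toHomeomorph.trans
    (.setCongr (range_precomp_toDiagonalImage hg A))

lemma separableSpace_determinedBy [T2Space S] [SecondCountableTopology S]
    (hX : HasCountableNetweight X) (hg : IsProperMap g) {A : Set C(Z, ℝ)} (hA : A.Countable) :
    SeparableSpace (determinedBy X g A) := by
  have := hA.to_subtype
  have := (hX.prod (.of_secondCountable (X := DiagonalImage g A))).cp.separableSpace
  let e := diagonalHomeomorph X hg A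
  exact e.surjective.denseRange.separableSpace e.continuous

end DeterminedBy

section ClosingOff

variable {X Y Z S : Type*} [TopologicalSpace X] [TopologicalSpace Y] [TopologicalSpace Z]
  [TopologicalSpace S] {g : Z → S}

lemma exists_countable_mapsTo_determinedBy [T2Space S] [SecondCountableTopology S]
    [SeparableSpace Y] (hX : HasCountableNetweight X) (hg : IsProperMap g)
    {φ : Cp (X × Z) → Cp (Y × Z)} (hφ : Continuous φ) {A : Set C(Z, ℝ)} (hA : A.Countable) :
    ∃ B : Set C(Z, ℝ), B.Countable ∧ MapsTo φ (determinedBy X g A) (determinedBy Y g B) := by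
  have := separableSpace_determinedBy hX hg hA
  have hrestrict : Continuous fun F : determinedBy X g A => φ F := hφ.comp continuous_subtype_val
  obtain ⟨B, hB, hφB⟩ := exists_countable_range_subset_determinedBy Y g hrestrict
  exact ⟨B, hB, fun F hF => hφB ⟨⟨F, hF⟩, rfl⟩⟩

lemma mapsTo_determinedBy_iUnion [T35Space S] (hg : Continuous g)
    {φ : Cp (X × Z) → Cp (Y × Z)} (hφ : Continuous φ) {A : ℕ → Set C(Z, ℝ)} (hA : Monotone A)
    (h : ∀ n, MapsTo φ (determinedBy X g (A n)) (determinedBy Y g (A (n + 1)))) :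
    MapsTo φ (determinedBy X g (⋃ n, A n)) (determinedBy Y g (⋃ n, A n)) := by
  have hpieces : MapsTo φ (⋃ n, determinedBy X g (A n)) (determinedBy Y g (⋃ n, A n)) :=
    mapsTo_iUnion.2 fun n => (h n).mono_right (determinedBy_mono Y (subset_iUnion A (n + 1)))
  exact (hpieces.closure_left hφ (isClosed_determinedBy Y g _)).mono_left
    (determinedBy_iUnion_subset_closure hg hA)

lemma exists_countable_image_determinedBy_eq [T35Space S] [SecondCountableTopology S]
    (hX : HasCountableNetweight X) (hY : HasCountableNetweight Y) (hg : IsProperMap g)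
    (φ : Cp (X × Z) ≃ₜ Cp (Y × Z)) :
    ∃ A : Set C(Z, ℝ), A.Countable ∧ φ '' determinedBy X g A = determinedBy Y g A := by
  have := hX.separableSpace
  have := hY.separableSpace
  have hstep : ∀ A : Set C(Z, ℝ), A.Countable → ∃ B, B.Countable ∧ A ⊆ B ∧
      MapsTo φ (determinedBy X g A) (determinedBy Y g B) ∧
      MapsTo φ.symm (determinedBy Y g A) (determinedBy X g B) := by
    intro A hA
    obtain ⟨B, hB, hφB⟩ := exists_countable_mapsTo_determinedBy hX hg φ.continuous hA
    obtain ⟨C, hC, hφC⟩ := exists_countable_mapsTo_determinedBy hY hg φ.symm.continuous hA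
    refine ⟨A ∪ (B ∪ C), hA.union (hB.union hC), subset_union_left,
      hφB.mono_right (determinedBy_mono Y ?_), hφC.mono_right (determinedBy_mono X ?_)⟩
    · exact subset_union_left.trans subset_union_right
    · exact subset_union_right.trans subset_union_right
  obtain ⟨A, hmono, hA, hR⟩ := exists_monotone_seq_countable hstep
  have hφ := mapsTo_determinedBy_iUnion hg.continuous φ.continuous hmono fun n => (hR n).1
  have hψ := mapsTo_determinedBy_iUnion hg.continuous φ.symm.continuous hmono fun n => (hR n).2
  exact ⟨⋃ n, A n, countable_iUnion hA, hφ.image_subset.antisymm fun G hG =>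
    ⟨φ.symm G, hψ hG, φ.apply_symm_apply G⟩⟩

end ClosingOff

end Cp

theorem stmt0_general {X Y : Type*} {Z S : Type u} [TopologicalSpace X] [TopologicalSpace Y]
    [TopologicalSpace Z] [TopologicalSpace S] [MetrizableSpace S] [SeparableSpace S]
    (hX : HasCountableNetweight X) (hY : HasCountableNetweight Y)
    {g : Z → S} (hg : IsPerfectMap g) (h : Nonempty (Cp (X × Z) ≃ₜ Cp (Y × Z))) :
    ∃ (M : Type u) (tM : TopologicalSpace M), MetrizableSpace M ∧ SeparableSpace M ∧
      (∃ g : Z → M, Function.Surjective g ∧ IsPerfectMap g) ∧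
      Nonempty (Cp (X × M) ≃ₜ Cp (Y × M)) := by
  obtain ⟨φ⟩ := h
  have hg : IsProperMap g := isProperMap_iff_isClosedMap_and_compact_fibers.2 hg
  have : SecondCountableTopology S := by
    let := metrizableSpaceMetric S
    exact UniformSpace.secondCountable_of_separable S
  obtain ⟨A, hA, hφA⟩ := Cp.exists_countable_image_determinedBy_eq hX hY hg φ
  have := hA.to_subtype
  refine ⟨DiagonalImage g A, inferInstance, inferInstance, inferInstance,
    ⟨toDiagonalImage g A, surjective_toDiagonalImage g A,
      isProperMap_iff_isClosedMap_and_compact_fibers.1 (isProperMap_toDiagonalImage A hg)⟩, ⟨?_⟩⟩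
  exact (Cp.diagonalHomeomorph X hg A).trans <| (φ.image _).trans <|
    (Homeomorph.setCongr hφA).trans (Cp.diagonalHomeomorph Y hg A).symm

/-- If `X` and `Y` are Tychonoff spaces of countable netweight and `Z` is a Tychonoff space
admitting a perfect map onto a separable metrizable space, and `Cp (X × Z)` is homeomorphic to
`Cp (Y × Z)`, then there is a separable metrizable perfect image `M` of `Z` with
`Cp (X × M)` homeomorphic to `Cp (Y × M)`. -/
theorem stmt0 {X Y Z : Type u} [TopologicalSpace X] [TopologicalSpace Y] [TopologicalSpace Z]
    [T35Space X] [T35Space Y] [T35Space Z]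
    (hX : HasCountableNetweight X) (hY : HasCountableNetweight Y)
    (hZ : ∃ (S : Type u) (tS : TopologicalSpace S), MetrizableSpace S ∧ SeparableSpace S ∧
      ∃ g : Z → S, Function.Surjective g ∧ IsPerfectMap g)
    (h : Nonempty (Cp (X × Z) ≃ₜ Cp (Y × Z))) :
    ∃ (M : Type u) (tM : TopologicalSpace M), MetrizableSpace M ∧ SeparableSpace M ∧
      (∃ g : Z → M, Function.Surjective g ∧ IsPerfectMap g) ∧
      Nonempty (Cp (X × M) ≃ₜ Cp (Y × M)) := by
  obtain ⟨S, _, _, _, g, -, hg⟩ := hZ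
  exact stmt0_general hX hY hg h
end

section
/- Let $X$ be a separable topological space, $Z$ a topological space, and $f:X\times Z\to \mathbb{R}^{\omega}$ a perfect map. Then there exist a continuous map $F_1: Z\to \mathbb{R}^{\omega}$ and a continuous map $F_2: X\times F_1(Z)\to \mathbb{R}^{\omega}$ such that $f=F_2\circ (\mathrm{id}_X\times F_1)$, where $F_1(Z)$ carries the subspace topology from $\mathbb{R}^{\omega}$ and $(\mathrm{id}_X\times F_1)(x,z)=(x,F_1(z))$. -/
open TopologicalSpace Function Set Topology

/-!
Let `d` be a dense sequence in `X`. The map `z ↦ (f (d i, z))ᵢ` determines `f (·, z)` by density,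
so `f` is constant on the fibers of `id × F₁`, where `F₁ : Z → (ℝ^ω)^ω ≅ ℝ^ω`. A single coordinate
`f (d i, ·)` is already perfect, hence so is `F₁`, as `ℝ^ω` is Hausdorff. Products with the
identity preserve perfect maps, so `id × F₁` is perfect too, thus a quotient map onto `X × F₁(Z)`,
and `f` descends continuously.
-/

section ProperSlices

variable {ι X Y Z : Type*} [TopologicalSpace X] [TopologicalSpace Y] [TopologicalSpace Z]
  {f : X × Z → Y}

theorem isProperMap_comp_prodMk_right [T1Space Y] (hf : IsProperMap f) (x : X) :
    IsProperMap fun z => f (x, z) := by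
  refine isProperMap_iff_ultrafilter.2 ⟨hf.continuous.comp (by fun_prop), fun 𝒰 y hy => ?_⟩
  obtain ⟨⟨x', z⟩, rfl, hle⟩ := hf.ultrafilter_le_nhds_of_tendsto (𝒰 := 𝒰.map (x, ·)) hy
  rw [nhds_prod_eq, Filter.le_prod] at hle
  have hx : x ⤳ x' := specializes_iff_pure.2 (Filter.map_const.ge.trans hle.1)
  -- The limit `x'` may differ from `x`, but `f (·, z)` is constant on `closure {x}`.
  have hfx : f (x, z) = f (x', z) :=
    (hx.prod (specializes_refl z)).map hf.continuous |>.eq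
  exact ⟨z, hfx, hle.2⟩

theorem isProperMap_pi_slices [T2Space Y] [Nonempty ι] (hf : IsProperMap f) (d : ι → X) :
    IsProperMap fun z i => f (d i, z) :=
  let ⟨i⟩ := ‹Nonempty ι›
  isProperMap_of_comp_of_t2
    (continuous_pi fun j => (isProperMap_comp_prodMk_right hf (d j)).continuous)
    (continuous_apply i) (isProperMap_comp_prodMk_right hf (d i))

end ProperSlices

section Factorization

variable {W X Y Z : Type*} [TopologicalSpace W] [TopologicalSpace X] [TopologicalSpace Y]
  [TopologicalSpace Z] {F : Z → W}

theorem isProperMap_rangeFactorization (hF : IsProperMap F) :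
    IsProperMap (rangeFactorization F) :=
  isProperMap_of_comp_of_inj hF.continuous.rangeFactorization continuous_subtype_val hF
    Subtype.val_injective

theorem isQuotientMap_id_prodMap_rangeFactorization (hF : IsProperMap F) :
    IsQuotientMap (Prod.map (id : X → X) (rangeFactorization F)) :=
  have h := isProperMap_id.prodMap (isProperMap_rangeFactorization hF)
  h.isClosedMap.isQuotientMap h.continuous (surjective_id.prodMap rangeFactorization_surjective)

theorem exists_continuous_factor_prod_range (hF : IsProperMap F) {f : X × Z → Y}
    (hf : Continuous f) (h : ∀ x z z', F z = F z' → f (x, z) = f (x, z')) :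
    ∃ g : X × range F → Y, Continuous g ∧ ∀ x z, f (x, z) = g (x, ⟨F z, ⟨z, rfl⟩⟩) := by
  have hquot := isQuotientMap_id_prodMap_rangeFactorization (X := X) hF
  let q : C(X × Z, X × range F) := ⟨Prod.map id (rangeFactorization F), hquot.continuous⟩
  have hfactors : FactorsThrough f q := by
    rintro ⟨x, z⟩ ⟨x', z'⟩ hq
    obtain ⟨rfl, hz⟩ := Prod.mk.inj hq
    exact h x z z' (congrArg Subtype.val hz)
  let g : C(X × range F, Y) := IsQuotientMap.lift (f := q) hquot ⟨f, hf⟩ hfactors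
  have hg : g.comp q = ⟨f, hf⟩ := IsQuotientMap.lift_comp hquot ⟨f, hf⟩ hfactors
  exact ⟨g, g.continuous, fun x z => (DFunLike.congr_fun hg (x, z)).symm⟩

end Factorization

/-- The reindexing homeomorphism `E^ω ≅ (E^ω)^ω` given by Cantor's pairing function. -/
def natPiCurry (E : Type*) [TopologicalSpace E] : (ℕ → E) ≃ₜ (ℕ → ℕ → E) :=
  (Homeomorph.piCongrLeft Nat.pairEquiv.symm).trans Homeomorph.piCurry

theorem stmt3_general {X Z E : Type*} [TopologicalSpace X] [TopologicalSpace Z]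
    [TopologicalSpace E] [SeparableSpace X] [T2Space E] [Nonempty E]
    (f : X × Z → ℕ → E) (hf : IsPerfectMap f) :
    ∃ F₁ : Z → ℕ → E, Continuous F₁ ∧
      ∃ F₂ : X × (Set.range F₁) → ℕ → E, Continuous F₂ ∧
        ∀ (x : X) (z : Z), f (x, z) = F₂ (x, ⟨F₁ z, ⟨z, rfl⟩⟩) := by
  obtain _ | _ := isEmpty_or_nonempty X
  · exact ⟨fun _ => Classical.arbitrary _, continuous_const, isEmptyElim,
      continuous_of_const isEmptyElim, isEmptyElim⟩
  have hproper : IsProperMap f := isProperMap_iff_isClosedMap_and_compact_fibers.2 hf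
  let F₁ : Z → ℕ → E := (natPiCurry E).symm ∘ fun z i => f (denseSeq X i, z)
  have hF₁ : IsProperMap F₁ :=
    (natPiCurry E).symm.isProperMap.comp (isProperMap_pi_slices hproper (denseSeq X))
  have hconst (x : X) (z z' : Z) (h : F₁ z = F₁ z') : f (x, z) = f (x, z') :=
    have hslices : (fun i => f (denseSeq X i, z)) = fun i => f (denseSeq X i, z') :=
      (natPiCurry E).symm.injective h
    congrFun ((denseRange_denseSeq X).equalizer (hf.1.comp (.prodMk_left z))
      (hf.1.comp (.prodMk_left z')) hslices) x
  exact ⟨F₁, hF₁.continuous, exists_continuous_factor_prod_range hF₁ hproper.continuous hconst⟩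

/-- Factorization lemma: a perfect map `f : X × Z → ℝ^ω` with `X` separable factors as
`F₂ ∘ (id_X × F₁)` through `X × F₁(Z)`. -/
theorem stmt3 {X Z : Type*} [TopologicalSpace X] [TopologicalSpace Z]
    [T35Space X] [T35Space Z] [SeparableSpace X]
    (f : X × Z → ℕ → ℝ) (hf : IsPerfectMap f) :
    ∃ F₁ : Z → ℕ → ℝ, Continuous F₁ ∧
      ∃ F₂ : X × (Set.range F₁) → ℕ → ℝ, Continuous F₂ ∧
        ∀ (x : X) (z : Z), f (x, z) = F₂ (x, ⟨F₁ z, ⟨z, rfl⟩⟩) :=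
  stmt3_general f hf
end

section
/- Let $\tau$ be an ordinal of uncountable cofinality, viewed as the topological space of all ordinals strictly below $\tau$ with the order topology, let $M$ be a separable metrizable space, and let $f:\tau\to M$ be a continuous surjection. Then for any topological space $X$, the map $\mathrm{id}_X\times f: X\times\tau\to X\times M$, $(x,\alpha)\mapsto (x,f(\alpha))$, is a quotient map. -/
open TopologicalSpace Function Set Topology

universe u v

/-!
A countable subset of an ordinal of uncountable cofinality is bounded, so it lies in a compact
initial segment. Applied to one preimage of each point of a countable dense subset of `M`, this
gives a compact `K ⊆ τ` whose image is compact and dense, that is, all of `M`. The restriction of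
`f` to `K` is then a proper surjection. Properness survives the product with `id`, so `id × f` is a
quotient map already on the closed subspace `X × K`.
-/

/-- A topological space is `ω`-bounded if each of its countable subsets lies in a compact subset.
For Hausdorff spaces this says that countable subsets have compact closure. Here it is the property
of ordinals of uncountable cofinality that makes `id × f` a quotient map. -/
def OmegaBounded (A : Type*) [TopologicalSpace A] : Prop :=
  ∀ s : Set A, s.Countable → ∃ K, IsCompact K ∧ s ⊆ K

theorem bddAbove_of_countable_of_aleph0_lt_cof {α : Type*} [LinearOrder α]
    (hα : Cardinal.aleph0 < Order.cof α) {s : Set α} (hs : s.Countable) : BddAbove s := by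
  have hs_cof : ¬ IsCofinal s := fun h =>
    ((Order.cof_le h).trans hs.le_aleph0).not_gt hα
  obtain ⟨b, hb⟩ : ∃ b, ∀ a ∈ s, a < b := by simpa [IsCofinal] using hs_cof
  exact ⟨b, fun a ha => (hb a ha).le⟩

theorem omegaBounded_of_aleph0_lt_cof {α : Type*} [LinearOrder α] [OrderBot α]
    [TopologicalSpace α] [CompactIccSpace α] (hα : Cardinal.aleph0 < Order.cof α) :
    OmegaBounded α := by
  intro s hs
  obtain ⟨b, hb⟩ := bddAbove_of_countable_of_aleph0_lt_cof hα hs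
  exact ⟨Icc ⊥ b, isCompact_Icc, fun a ha => ⟨bot_le, hb ha⟩⟩

theorem omegaBounded_of_wellFoundedLT_of_aleph0_lt_cof {α : Type*} [LinearOrder α]
    [WellFoundedLT α] [TopologicalSpace α] [OrderTopology α]
    (hα : Cardinal.aleph0 < Order.cof α) : OmegaBounded α := by
  have : Nonempty α := Order.cof_ne_zero_iff.mp hα.ne_bot
  let := WellFoundedLT.toOrderBot α
  let := WellFoundedLT.conditionallyCompleteLinearOrderBot α
  exact omegaBounded_of_aleph0_lt_cof hα

theorem omegaBounded_Iio_ordinal {τ : Ordinal.{u}} (hτ : Cardinal.aleph0 < τ.cof) :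
    OmegaBounded (Iio τ) :=
  omegaBounded_of_wellFoundedLT_of_aleph0_lt_cof (by simpa [← Ordinal.lift_cof] using hτ)

section

variable {A M : Type*} [TopologicalSpace A] [TopologicalSpace M] [T2Space M] {f : A → M}

theorem OmegaBounded.exists_isCompact_image_eq_univ [SeparableSpace M] (hA : OmegaBounded A)
    (hf : Continuous f) (hsurj : Surjective f) : ∃ K, IsCompact K ∧ f '' K = univ := by
  obtain ⟨D, hD_countable, hD_dense⟩ := exists_countable_dense M
  obtain ⟨K, hK, hDK⟩ := hA (surjInv hsurj '' D) (hD_countable.image _)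
  have hD_image : D ⊆ f '' K := fun d hd =>
    ⟨surjInv hsurj d, hDK (mem_image_of_mem _ hd), surjInv_eq hsurj d⟩
  refine ⟨K, hK, ?_⟩
  rw [← (hK.image hf).isClosed.closure_eq, (hD_dense.mono hD_image).closure_eq]

theorem isQuotientMap_prodMap_id_of_isCompact_image_eq_univ (X : Type*) [TopologicalSpace X]
    (hf : Continuous f) {K : Set A} (hK : IsCompact K) (hfK : f '' K = univ) :
    IsQuotientMap (Prod.map (id : X → X) f) := by
  have : CompactSpace K := isCompact_iff_compactSpace.mp hK
  have hfK_proper : IsProperMap (K.domRestrict f) := hf.continuousOn.domRestrict.isProperMap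
  have hfK_surj : Surjective (K.domRestrict f) := by
    rw [← range_eq_univ, range_domRestrict, hfK]
  have h_proper : IsProperMap (Prod.map (id : X → X) (K.domRestrict f)) :=
    isProperMap_id.prodMap hfK_proper
  have h_quotient : IsQuotientMap (Prod.map (id : X → X) (K.domRestrict f)) :=
    h_proper.isClosedMap.isQuotientMap h_proper.continuous (surjective_id.prodMap hfK_surj)
  exact IsQuotientMap.of_comp (f := Prod.map (id : X → X) ((↑) : K → A))
    (continuous_id.prodMap continuous_subtype_val) (continuous_id.prodMap hf) h_quotient

theorem stmt6_general [SeparableSpace M] (hA : OmegaBounded A) (hf : Continuous f)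
    (hsurj : Surjective f) (X : Type*) [TopologicalSpace X] :
    IsQuotientMap (Prod.map (id : X → X) f) := by
  obtain ⟨K, hK, hfK⟩ := hA.exists_isCompact_image_eq_univ hf hsurj
  exact isQuotientMap_prodMap_id_of_isCompact_image_eq_univ X hf hK hfK

end

/-- If `τ` has uncountable cofinality, `M` is separable metrizable, and `f : τ → M` is a
continuous surjection, then `id_X × f : X × τ → X × M` is a quotient map for every `X`. -/
theorem stmt6 (τ : Ordinal.{u}) (hτ : Cardinal.aleph0 < τ.cof)
    {M : Type u} [TopologicalSpace M] [MetrizableSpace M] [SeparableSpace M]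
    (f : Set.Iio τ → M) (hf : Continuous f) (hsurj : Function.Surjective f)
    (X : Type v) [TopologicalSpace X] [T35Space X] :
    Topology.IsQuotientMap (Prod.map (id : X → X) f) :=
  stmt6_general (omegaBounded_Iio_ordinal hτ) hf hsurj X
end

section
/- Let $X=\mathbb{R}$ be the space of real numbers, let $Y=\mathbb{P}$ be the space of irrational numbers with the subspace topology from $\mathbb{R}$, and let $Z=X^{\omega}\times Y^{\omega}$ with the product topology. Then $C_p(X\times Z)$ is homeomorphic to $C_p(Y\times Z)$. -/
open TopologicalSpace Function Set Topology

/-- The homeomorphism of function spaces given by precomposition with the inverse of `e`. -/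
def Cp.congr {S T : Type*} [TopologicalSpace S] [TopologicalSpace T] (e : S ≃ₜ T) :
    Cp S ≃ₜ Cp T :=
  (Homeomorph.piCongrLeft (Y := fun _ ↦ ℝ) e.symm.toEquiv).symm.subtype
    fun _ ↦ e.symm.comp_continuous_iff'.symm

theorem nonempty_option_equiv_self (ι : Type*) [Infinite ι] : Nonempty (Option ι ≃ ι) :=
  Cardinal.eq.mp (Cardinal.mk_option.trans Cardinal.mk_add_one_eq)

section Absorption

variable {X A B ι : Type*} [TopologicalSpace X] [TopologicalSpace A] [TopologicalSpace B]

/-- The power `X ^ ι` absorbs a further factor `X`, placed at the index `e none`. -/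
def prodArrowHomeomorphArrow (e : Option ι ≃ ι) : X × (ι → X) ≃ₜ (ι → X) :=
  let singleFactor : X × (ι → X) ≃ₜ (ι → X) × (Unit → X) :=
    (Homeomorph.prodComm X (ι → X)).trans
      ((Homeomorph.refl (ι → X)).prodCongr (Homeomorph.funUnique Unit X).symm)
  let reindex : (ι ⊕ Unit → X) ≃ₜ (ι → X) :=
    Homeomorph.piCongrLeft (Y := fun _ ↦ X) ((Equiv.optionEquivSumPUnit ι).symm.trans e)
  singleFactor.trans (Homeomorph.sumArrowHomeomorphProdArrow.symm.trans reindex)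

/-- A space that absorbs the factor `X` still does so when multiplied on the right by `B`. -/
def prodProdHomeomorphOfLeft (e : X × A ≃ₜ A) : X × (A × B) ≃ₜ A × B :=
  (Homeomorph.prodAssoc X A B).symm.trans (e.prodCongr (Homeomorph.refl B))

/-- A space that absorbs the factor `X` still does so when multiplied on the left by `A`. -/
def prodProdHomeomorphOfRight (e : X × B ≃ₜ B) : X × (A × B) ≃ₜ A × B :=
  let swapFactors := Homeomorph.prodComm A B
  ((Homeomorph.refl X).prodCongr swapFactors).trans
    ((prodProdHomeomorphOfLeft e).trans swapFactors.symm)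

end Absorption

theorem stmt10_general {X Y ι κ : Type*} [TopologicalSpace X] [TopologicalSpace Y]
    [Infinite ι] [Infinite κ] :
    Nonempty (Cp (X × ((ι → X) × (κ → Y))) ≃ₜ Cp (Y × ((ι → X) × (κ → Y)))) := by
  obtain ⟨eι⟩ := nonempty_option_equiv_self ι
  obtain ⟨eκ⟩ := nonempty_option_equiv_self κ
  let absorbX : X × ((ι → X) × (κ → Y)) ≃ₜ (ι → X) × (κ → Y) :=
    prodProdHomeomorphOfLeft (prodArrowHomeomorphArrow eι)
  let absorbY : Y × ((ι → X) × (κ → Y)) ≃ₜ (ι → X) × (κ → Y) :=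
    prodProdHomeomorphOfRight (prodArrowHomeomorphArrow eκ)
  exact ⟨Cp.congr (absorbX.trans absorbY.symm)⟩

/-- With `X = ℝ`, `Y` the irrationals, and `Z = X^ω × Y^ω`, the spaces `Cp (X × Z)` and
`Cp (Y × Z)` are homeomorphic. -/
theorem stmt10 :
    Nonempty
      (Cp (ℝ × ((ℕ → ℝ) × (ℕ → {x : ℝ // Irrational x}))) ≃ₜ
       Cp ({x : ℝ // Irrational x} × ((ℕ → ℝ) × (ℕ → {x : ℝ // Irrational x})))) :=
  stmt10_general
end
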